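/- Let d ≥ 1, let I be a metric space, let S : I → Matrix d d ℂ be continuous, and let Λ ⊆ Σ_I^+ be a nonempty compact θ_+-invariant subset. Then the following are equivalent: (1) ρ(S|Λ) < 1; (2) S is Λ-absolutely exponentially stable, i.e. limsup_{n→∞} ‖S_{i_n}···S_{i_1}‖^{1/n} < 1 for every i(·) ∈ Λ; (3) S is Λ-pointwise exponentially stable, i.e. limsup_{n→∞} ‖S_{i_n}···S_{i_1} x₀‖^{1/n} < 1 for every nonzero x₀ ∈ ℂ^d and every i(·) ∈ Λ. -/

import Mathlib

open Filter Topology MeasureTheory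

/-- Operator norm on `d × d` complex matrices induced by the Euclidean norm on `ℂ^d`. -/
noncomputable def opNorm {d : ℕ} (A : Matrix (Fin d) (Fin d) ℂ) : ℝ :=
  ‖Matrix.toEuclideanCLM (𝕜 := ℂ) A‖

/-- Spectral radius of a complex matrix, as a real number. -/
noncomputable def specRad {d : ℕ} (A : Matrix (Fin d) (Fin d) ℂ) : ℝ :=
  (spectralRadius ℂ A).toReal

/-- `prodS S x n = S_{i_n} ⋯ S_{i_1}` where `i_k = x (k-1)`. -/
noncomputable def prodS {d : ℕ} {I : Type*} (S : I → Matrix (Fin d) (Fin d) ℂ)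
    (x : ℕ → I) : ℕ → Matrix (Fin d) (Fin d) ℂ
  | 0 => 1
  | n + 1 => S (x n) * prodS S x n

/-- `Λ` is invariant under the one-sided shift `θ₊`. -/
def ShiftInv {I : Type*} (Λ : Set (ℕ → I)) : Prop :=
  ∀ x ∈ Λ, (fun n => x (n + 1)) ∈ Λ

/-- Generalized spectral radius of `S` restricted to `Λ`. -/
noncomputable def gsr {d : ℕ} {I : Type*} (S : I → Matrix (Fin d) (Fin d) ℂ)
    (Λ : Set (ℕ → I)) : ℝ :=
  Filter.limsup (fun n : ℕ => ⨆ x : Λ, specRad (prodS S x.1 n) ^ (1 / (n : ℝ))) Filter.atTop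

/-!
All three conditions are compared with uniform exponential stability: `‖S_{i_n} ⋯ S_{i_1}‖ ≤ C rⁿ`
with the same `C` and `r < 1` for all signals in `Λ`.

Absolute or pointwise stability makes every signal contract at some time. By compactness these times
are bounded and the contraction factors stay away from `1`; by shift invariance the contractions can
be chained, which gives a uniform rate.

The spectral condition is handled by a quantitative Berger–Wang argument in the style of Bochi. If
all products of consecutive terms of a sequence of `d × d` matrices are nilpotent, then the product
of its first `N` terms vanishes, where `N` depends only on `d`: the ranges and kernels of the
factors form a skew Bollobás system, whose length is bounded, so the rank has to drop. Nilpotency is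
the vanishing of the lower coefficients of the characteristic polynomials, so the Nullstellensatz
turns this fact into an inequality: for matrices of norm at most `1`, some power of the norm of the
product of length `N` is at most a constant times a common bound on the spectral radii. Let `a n` be
the supremum over `Λ` of the norms of the products of length `n`. Applied to blocks of length `n`,
the inequality reads `a (N n) ^ m ≤ C rⁿ a n ^ (N m)`. If `a` never dropped below `1`, then by
Fekete's lemma `log (a n) / n` would converge, and both sides could only be compatible for `r ≥ 1`.
-/

section ConsecutiveProducts

variable {M : Type*} [Monoid M]

/-- The product `A (i + l - 1) * ⋯ * A i` of `l` consecutive terms of a sequence, latest factor on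
the left as in `prodS`. -/
def consecProd (A : ℕ → M) (i : ℕ) : ℕ → M
  | 0 => 1
  | l + 1 => A (i + l) * consecProd A i l

@[simp]
theorem consecProd_zero (A : ℕ → M) (i : ℕ) : consecProd A i 0 = 1 := rfl

theorem consecProd_succ (A : ℕ → M) (i l : ℕ) :
    consecProd A i (l + 1) = A (i + l) * consecProd A i l := rfl

@[simp]
theorem consecProd_one (A : ℕ → M) (i : ℕ) : consecProd A i 1 = A i := mul_one _

theorem consecProd_add (A : ℕ → M) (i l m : ℕ) :
    consecProd A i (l + m) = consecProd A (i + l) m * consecProd A i l := by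
  induction m with
  | zero => simp
  | succ m ih => rw [← add_assoc, consecProd_succ, consecProd_succ, ih, mul_assoc, add_assoc]

theorem consecProd_consecProd (A : ℕ → M) (N i l : ℕ) :
    consecProd (fun j => consecProd A (j * N) N) i l = consecProd A (i * N) (l * N) := by
  induction l with
  | zero => simp
  | succ l ih => rw [consecProd_succ, ih, add_mul, Nat.succ_mul, consecProd_add]

theorem consecProd_comp_add (A : ℕ → M) (s i l : ℕ) :
    consecProd (fun j => A (j + s)) i l = consecProd A (i + s) l := by
  induction l with
  | zero => simp
  | succ l ih => rw [consecProd_succ, ih, consecProd_succ, add_right_comm]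

theorem map_consecProd {M' F : Type*} [Monoid M'] [FunLike F M M'] [MonoidHomClass F M M'] (φ : F)
    (A : ℕ → M) (i l : ℕ) : φ (consecProd A i l) = consecProd (fun j => φ (A j)) i l := by
  induction l with
  | zero => simp
  | succ l ih => rw [consecProd_succ, map_mul, ih, consecProd_succ]

end ConsecutiveProducts

section SkewBollobas

open Module

variable {k V : Type*} [Field k] [AddCommGroup V] [Module k V]

theorem linearIndependent_of_triangular {n : ℕ} {f : Fin n → Dual k V} {v : Fin n → V}
    (hdiag : ∀ i, f i (v i) ≠ 0) (htri : ∀ i j, i < j → f j (v i) = 0) :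
    LinearIndependent k v := by
  let G : Matrix (Fin n) (Fin n) k := Matrix.of fun i j => f j (v i)
  have hdet : G.det ≠ 0 := by
    rw [Matrix.det_of_isLowerTriangular G fun i j hij => htri i j hij]
    exact Finset.prod_ne_zero_iff.2 fun i _ => hdiag i
  have hrows : LinearIndependent k (LinearMap.pi f ∘ v) :=
    Matrix.linearIndependent_rows_of_det_ne_zero hdet
  exact hrows.of_comp

theorem det_mkQ_ne_zero_iff_disjoint {ι : Type*} [Fintype ι] [DecidableEq ι] {K R : Submodule k V}
    (b : Basis ι k (V ⧸ K)) (c : Basis ι k R) :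
    b.det (fun t => K.mkQ (c t)) ≠ 0 ↔ Disjoint R K := by
  have hspan : Submodule.span k (Set.range fun t => (c t : V)) = R := by
    rw [← Function.comp_def, Set.range_comp, ← R.coe_subtype, Submodule.span_image, c.span_eq,
      Submodule.map_top, Submodule.range_subtype]
  have hc : LinearIndependent k fun t => (c t : V) :=
    c.linearIndependent.map' R.subtype R.ker_subtype
  rw [← isUnit_iff_ne_zero, ← b.is_basis_iff_det]
  constructor
  · rintro ⟨hli, -⟩
    have hdisj := Submodule.range_ker_disjoint (f := K.mkQ) (v := fun t => (c t : V)) hli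
    rwa [hspan, K.ker_mkQ] at hdisj
  · intro hdisj
    have hli : LinearIndependent k fun t => K.mkQ (c t) :=
      hc.map (by rwa [hspan, K.ker_mkQ])
    have : FiniteDimensional k (V ⧸ K) := b.finiteDimensional_of_finite
    exact ⟨hli, hli.span_eq_top_of_card_eq_finrank' (finrank_eq_card_basis b).symm⟩

-- A subspace `K` of codimension `r` is encoded by the pullback to `V` of a volume form on `V ⧸ K`.
theorem card_le_finrank_multilinearMap_of_skew_disjoint [FiniteDimensional k V] {n r : ℕ}
    {K R : Fin n → Submodule k V} (hK : ∀ i, finrank k (V ⧸ K i) = r)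
    (hR : ∀ i, finrank k (R i) = r) (hdiag : ∀ i, Disjoint (R i) (K i))
    (hskew : ∀ i j, i < j → ¬ Disjoint (R j) (K i)) :
    n ≤ finrank k (MultilinearMap k (fun _ : Fin r => V) k) := by
  let b i : Basis (Fin r) k (V ⧸ K i) := finBasisOfFinrankEq k _ (hK i)
  let c i : Basis (Fin r) k (R i) := finBasisOfFinrankEq k _ (hR i)
  let ω i : MultilinearMap k (fun _ : Fin r => V) k :=
    (b i).det.toMultilinearMap.compLinearMap fun _ => (K i).mkQ
  let eval j : Dual k (MultilinearMap k (fun _ : Fin r => V) k) :=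
    { toFun := fun g => g fun t => c j t
      map_add' := fun _ _ => rfl
      map_smul' := fun _ _ => rfl }
  have heval i j : eval j (ω i) ≠ 0 ↔ Disjoint (R j) (K i) :=
    det_mkQ_ne_zero_iff_disjoint (b i) (c j)
  have hω : LinearIndependent k ω :=
    linearIndependent_of_triangular (f := eval) (fun i => (heval i i).2 (hdiag i))
      fun i j hij => not_not.1 fun h => hskew i j hij ((heval i j).1 h)
  simpa using hω.fintype_card_le_finrank

end SkewBollobas

section NilpotentProducts

open Module

variable {k V : Type*} [Field k] [AddCommGroup V] [Module k V]

theorem ker_mul_eq_ker_iff_disjoint (f g : End k V) :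
    LinearMap.ker (f * g) = LinearMap.ker g ↔ Disjoint (LinearMap.range g) (LinearMap.ker f) := by
  rw [LinearMap.disjoint_ker]
  constructor
  · rintro hker _ ⟨v, rfl⟩ hv
    exact LinearMap.mem_ker.1 (hker ▸ hv : v ∈ LinearMap.ker g)
  · intro hdisj
    exact le_antisymm (fun v hv => hdisj _ ⟨v, rfl⟩ hv) (LinearMap.ker_le_ker_comp g f)

theorem eq_zero_of_isNilpotent_of_disjoint {f : End k V} (hf : IsNilpotent f)
    (hdisj : Disjoint (LinearMap.range f) (LinearMap.ker f)) : f = 0 := by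
  obtain ⟨n, hn⟩ := hf
  have hker : LinearMap.ker (f ^ 1) = LinearMap.ker (f ^ 2) := by
    rw [pow_one, pow_two, (ker_mul_eq_ker_iff_disjoint f f).2 hdisj]
  rw [← LinearMap.ker_eq_top, ← pow_one f, End.ker_pow_constant hker n, pow_add, hn, mul_zero]
  exact LinearMap.ker_zero

variable [FiniteDimensional k V]

theorem finrank_range_mul_le_left (f g : End k V) :
    finrank k (LinearMap.range (f * g)) ≤ finrank k (LinearMap.range f) :=
  Submodule.finrank_mono (LinearMap.range_comp_le_range g f)

theorem finrank_range_mul_le_right (f g : End k V) :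
    finrank k (LinearMap.range (f * g)) ≤ finrank k (LinearMap.range g) := by
  rw [End.mul_eq_comp, LinearMap.range_comp]
  exact Submodule.finrank_map_le f _

variable {B : ℕ → End k V} {r m : ℕ}

theorem le_finrank_range_consecProd (hm : r ≤ finrank k (LinearMap.range (consecProd B 0 m)))
    {i l : ℕ} (hil : i + l ≤ m) : r ≤ finrank k (LinearMap.range (consecProd B i l)) := by
  obtain ⟨t, rfl⟩ := Nat.exists_eq_add_of_le hil
  rw [add_assoc, consecProd_add, zero_add, consecProd_add] at hm
  exact hm.trans ((finrank_range_mul_le_left _ _).trans (finrank_range_mul_le_right _ _))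

theorem finrank_range_eq_of_le (hB : ∀ i, finrank k (LinearMap.range (B i)) ≤ r)
    (hm : r ≤ finrank k (LinearMap.range (consecProd B 0 m))) {i : ℕ} (hi : i < m) :
    finrank k (LinearMap.range (B i)) = r :=
  (hB i).antisymm (consecProd_one B i ▸ le_finrank_range_consecProd hm hi)

theorem range_consecProd_eq (hB : ∀ i, finrank k (LinearMap.range (B i)) ≤ r)
    (hm : r ≤ finrank k (LinearMap.range (consecProd B 0 m))) {i l : ℕ} (hil : i + (l + 1) ≤ m) :
    LinearMap.range (consecProd B i (l + 1)) = LinearMap.range (B (i + l)) :=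
  Submodule.eq_of_le_of_finrank_le (LinearMap.range_comp_le_range _ _)
    ((hB _).trans (le_finrank_range_consecProd hm hil))

theorem ker_consecProd_eq (hB : ∀ i, finrank k (LinearMap.range (B i)) ≤ r)
    (hm : r ≤ finrank k (LinearMap.range (consecProd B 0 m))) {i l : ℕ} (hil : i + (l + 1) ≤ m) :
    LinearMap.ker (consecProd B i (l + 1)) = LinearMap.ker (B i) := by
  refine (Submodule.eq_of_le_of_finrank_le ?_ ?_).symm
  · rw [add_comm l 1, consecProd_add, consecProd_one]
    exact LinearMap.ker_le_ker_comp _ _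
  · have hrank := (hB i).trans (le_finrank_range_consecProd hm hil)
    have := LinearMap.finrank_range_add_finrank_ker (B i)
    have := LinearMap.finrank_range_add_finrank_ker (consecProd B i (l + 1))
    lia

-- If the rank stayed `r`, then `R i = range (B i)` and `K i = ker (B (i + 1))` would be a skew
-- family longer than the Bollobás bound: for `i < j` the product `B j ⋯ B (i + 1)` has range `R j`
-- and kernel `K i`, and a nonzero nilpotent map cannot have disjoint range and kernel.
theorem finrank_range_consecProd_lt (hr : r ≠ 0)
    (hm : m = finrank k (MultilinearMap k (fun _ : Fin r => V) k) + 2)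
    (hnil : ∀ i l, 1 ≤ l → IsNilpotent (consecProd B i l))
    (hB : ∀ i, finrank k (LinearMap.range (B i)) ≤ r) :
    finrank k (LinearMap.range (consecProd B 0 m)) < r := by
  by_contra! hle
  suffices m - 1 ≤ finrank k (MultilinearMap k (fun _ : Fin r => V) k) by lia
  refine card_le_finrank_multilinearMap_of_skew_disjoint
    (R := fun i : Fin (m - 1) => LinearMap.range (B i))
    (K := fun i : Fin (m - 1) => LinearMap.ker (B (i + 1))) (fun i => ?_) (fun i => ?_)
    (fun i => ?_) (fun i j hij hdisj => ?_)
  · rw [(B (i + 1)).quotKerEquivRange.finrank_eq]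
    exact finrank_range_eq_of_le hB hle (by lia)
  · exact finrank_range_eq_of_le hB hle (by lia)
  · rw [← ker_mul_eq_ker_iff_disjoint]
    simpa [consecProd_succ] using ker_consecProd_eq hB hle (i := i) (l := 1) (by lia)
  · obtain ⟨l, hl⟩ := Nat.exists_eq_add_of_le (show (i : ℕ) + 1 ≤ j from hij)
    have hil : (i : ℕ) + 1 + (l + 1) ≤ m := by lia
    have hzero : consecProd B (i + 1) (l + 1) = 0 := by
      refine eq_zero_of_isNilpotent_of_disjoint (hnil _ _ l.succ_pos) ?_
      rwa [range_consecProd_eq hB hle hil, ker_consecProd_eq hB hle hil, ← hl]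
    have hrank := le_finrank_range_consecProd hle hil
    rw [hzero, LinearMap.range_zero, finrank_bot] at hrank
    lia

variable (k V) in
theorem exists_consecProd_eq_zero_of_finrank_range_le (r : ℕ) :
    ∃ N, 1 ≤ N ∧ ∀ B : ℕ → End k V, (∀ i l, 1 ≤ l → IsNilpotent (consecProd B i l)) →
      (∀ i, finrank k (LinearMap.range (B i)) ≤ r) → consecProd B 0 N = 0 := by
  induction r with
  | zero =>
    refine ⟨1, le_rfl, fun B _ hB => ?_⟩
    rw [consecProd_one, ← LinearMap.range_eq_bot]
    exact Submodule.finrank_eq_zero.1 (Nat.le_zero.1 (hB 0))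
  | succ r ih =>
    obtain ⟨N, hN, hzero⟩ := ih
    let m := finrank k (MultilinearMap k (fun _ : Fin (r + 1) => V) k) + 2
    refine ⟨N * m, Nat.mul_pos hN (Nat.succ_pos _), fun B hnil hB => ?_⟩
    rw [← zero_mul m, ← consecProd_consecProd]
    refine hzero _ (fun i l hl => ?_) fun i => ?_
    · rw [consecProd_consecProd]
      exact hnil _ _ (Nat.mul_pos hl (Nat.succ_pos _))
    · have hlt := finrank_range_consecProd_lt (B := fun j => B (j + i * m)) r.succ_ne_zero rfl
        (fun a l hl => by rw [consecProd_comp_add]; exact hnil _ _ hl) fun j => hB _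
      rw [consecProd_comp_add, zero_add] at hlt
      exact Nat.lt_succ_iff.1 hlt

theorem exists_forall_matrix_consecProd_eq_zero (k n : Type*) [Field k] [Fintype n]
    [DecidableEq n] :
    ∃ N, 1 ≤ N ∧ ∀ A : ℕ → Matrix n n k,
      (∀ i l, 1 ≤ l → IsNilpotent (consecProd A i l)) → consecProd A 0 N = 0 := by
  obtain ⟨N, hN, hzero⟩ :=
    exists_consecProd_eq_zero_of_finrank_range_le k (n → k) (finrank k (n → k))
  refine ⟨N, hN, fun A hA => Matrix.toLinAlgEquiv'.injective ?_⟩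
  rw [map_zero, map_consecProd]
  refine hzero _ (fun i l hl => ?_) fun i => Submodule.finrank_le _
  rw [← map_consecProd]
  exact (hA i l hl).map _

end NilpotentProducts

section Nullstellensatz

open MvPolynomial

variable {𝕜 σ : Type*} [NormedField 𝕜] {s : Set (MvPolynomial σ 𝕜)} {K : Set (σ → 𝕜)}

theorem exists_norm_aeval_le_of_mem_span (hK : IsCompact K) {g : MvPolynomial σ 𝕜}
    (hg : g ∈ Ideal.span s) :
    ∃ C, ∀ p ∈ K, ∀ η, (∀ c ∈ s, ‖aeval p c‖ ≤ η) → ‖aeval p g‖ ≤ C * η := by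
  induction hg using Submodule.span_induction with
  | mem g hg => exact ⟨1, fun p _ η hη => (one_mul η).symm ▸ hη g hg⟩
  | zero => exact ⟨0, fun p _ η _ => by simp⟩
  | add g₁ g₂ _ _ ih₁ ih₂ =>
    obtain ⟨C₁, hC₁⟩ := ih₁
    obtain ⟨C₂, hC₂⟩ := ih₂
    refine ⟨C₁ + C₂, fun p hp η hη => ?_⟩
    rw [map_add, add_mul]
    exact norm_add_le_of_le (hC₁ p hp η hη) (hC₂ p hp η hη)
  | smul a g _ ih =>
    obtain ⟨C, hC⟩ := ih
    obtain ⟨B, hB⟩ := hK.exists_bound_of_continuousOn (continuous_eval a).continuousOn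
    refine ⟨B * C, fun p hp η hη => ?_⟩
    rw [smul_eq_mul, map_mul, mul_assoc]
    exact norm_mul_le_of_le (hB p hp) (hC p hp η hη)

theorem exists_norm_aeval_pow_le_of_forall_zeroLocus [Finite σ] [IsAlgClosed 𝕜] (hK : IsCompact K)
    {ι : Type*} [Finite ι] {f : ι → MvPolynomial σ 𝕜}
    (hf : ∀ p : σ → 𝕜, (∀ c ∈ s, aeval p c = 0) → ∀ i, aeval p (f i) = 0) :
    ∃ m C, ∀ p ∈ K, ∀ η, 0 ≤ η → (∀ c ∈ s, ‖aeval p c‖ ≤ η) → ∀ i, ‖aeval p (f i)‖ ^ m ≤ C * η := by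
  obtain ⟨m, hm⟩ := (Ideal.span s).exists_radical_pow_le_of_fg (Ideal.fg_of_isNoetherianRing _)
  have hmem i : f i ^ m ∈ Ideal.span s := by
    refine hm (Ideal.pow_mem_pow ?_ m)
    rw [← vanishingIdeal_zeroLocus_eq_radical (K := 𝕜), zeroLocus_span]
    exact fun p hp => hf p hp i
  choose C hC using fun i => exists_norm_aeval_le_of_mem_span hK (hmem i)
  obtain ⟨B, hB⟩ := Finite.exists_le C
  refine ⟨m, B, fun p hp η hη hs i => ?_⟩
  rw [← norm_pow, ← map_pow]
  exact (hC i p hp η hs).trans (mul_le_mul_of_nonneg_right (hB i) hη)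

end Nullstellensatz

section Charpoly

variable {n : Type*} [Fintype n] [DecidableEq n]

theorem isNilpotent_of_charpoly_coeff_eq_zero {R : Type*} [CommRing R] {A : Matrix n n R}
    (hA : ∀ t < Fintype.card n, A.charpoly.coeff t = 0) : IsNilpotent A := by
  nontriviality R
  have hchar : A.charpoly = Polynomial.X ^ Fintype.card n := by
    rw [A.charpoly_monic.as_sum, A.charpoly_natDegree_eq_dim, Finset.sum_eq_zero, add_zero]
    intro t ht
    rw [hA t (Finset.mem_range.1 ht), map_zero, zero_mul]
  refine ⟨Fintype.card n, ?_⟩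
  simpa [hchar] using A.aeval_self_charpoly

theorem norm_charpoly_coeff_le {A : Matrix n n ℂ} {η : ℝ} (hη₀ : 0 ≤ η) (hη₁ : η ≤ 1)
    (hA : ∀ z ∈ spectrum ℂ A, ‖z‖ ≤ η) {t : ℕ} (ht : t < Fintype.card n) :
    ‖A.charpoly.coeff t‖ ≤ 2 ^ Fintype.card n * η := by
  have hroots : ∀ z ∈ (A.charpoly.map (RingHom.id ℂ)).roots, ‖z‖ ≤ η := fun z hz =>
    hA z (Matrix.mem_spectrum_of_isRoot_charpoly
      (Polynomial.isRoot_of_mem_roots (by rwa [Polynomial.map_id] at hz)))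
  have hcoeff := Polynomial.coeff_le_of_roots_le t A.charpoly_monic (IsAlgClosed.splits _) hroots
  rw [Polynomial.map_id, A.charpoly_natDegree_eq_dim] at hcoeff
  calc ‖A.charpoly.coeff t‖
      ≤ η ^ (Fintype.card n - t) * (Fintype.card n).choose t := hcoeff
    _ ≤ η * 2 ^ Fintype.card n := by
        gcongr
        · exact pow_le_of_le_one hη₀ hη₁ (Nat.sub_pos_of_lt ht).ne'
        · exact_mod_cast Nat.choose_le_two_pow _ _
    _ = 2 ^ Fintype.card n * η := mul_comm _ _

theorem map_charpoly_coeff_consecProd {R R' : Type*} [CommRing R] [CommRing R'] (φ : R →+* R')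
    (A : ℕ → Matrix n n R) (i l t : ℕ) :
    φ ((consecProd A i l).charpoly.coeff t) =
      (consecProd (fun j => φ.mapMatrix (A j)) i l).charpoly.coeff t := by
  rw [← map_consecProd, RingHom.mapMatrix_apply, Matrix.charpoly_map, Polynomial.coeff_map]

end Charpoly

theorem consecProd_ite_lt {M : Type*} [MonoidWithZero M] (A : ℕ → M) (N i : ℕ) {l : ℕ}
    (hl : 1 ≤ l) :
    consecProd (fun j => if j < N then A j else 0) i l =
      if i + l ≤ N then consecProd A i l else 0 := by
  induction l, hl using Nat.le_induction with
  | base => simp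
  | succ l _ ih =>
    rw [consecProd_succ, ih, consecProd_succ A]
    grind [mul_zero, zero_mul]

section BochiInequality

open scoped Matrix.Norms.L2Operator
open MvPolynomial

variable {n : Type*}

/-- The sequence whose first `N` terms are matrices of independent indeterminates, continued by
zero matrices. -/
noncomputable def genericSeq (n 𝕜 : Type*) [CommSemiring 𝕜] (N j : ℕ) :
    Matrix n n (MvPolynomial (Fin N × n × n) 𝕜) :=
  if h : j < N then Matrix.of fun a b => X (⟨j, h⟩, a, b) else 0

variable [Fintype n] [DecidableEq n]

theorem mapMatrix_aeval_genericSeq {𝕜 : Type*} [CommSemiring 𝕜] (A : ℕ → Matrix n n 𝕜) (N j : ℕ) :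
    (aeval (R := 𝕜) fun q : Fin N × n × n => A q.1 q.2.1 q.2.2).toRingHom.mapMatrix
      (genericSeq n 𝕜 N j) = if j < N then A j else 0 := by
  unfold genericSeq
  split_ifs with hj
  · ext a b
    simp
  · simp

theorem norm_entry_le_l2_opNorm {𝕜 : Type*} [RCLike 𝕜] (A : Matrix n n 𝕜) (a b : n) :
    ‖A a b‖ ≤ ‖A‖ := by
  simpa using (PiLp.norm_apply_le _ a).trans (A.l2_opNorm_mulVec (EuclideanSpace.single b 1))

theorem exists_l2_opNorm_le_mul_norm_entry (n 𝕜 : Type*) [Fintype n] [DecidableEq n] [Nonempty n]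
    [RCLike 𝕜] :
    ∃ K, 0 ≤ K ∧ ∀ A : Matrix n n 𝕜, ∃ q : n × n, ‖A‖ ≤ K * ‖A q.1 q.2‖ := by
  refine ⟨∑ a : n, ∑ b : n, ‖Matrix.single a b (1 : 𝕜)‖, by positivity, fun A => ?_⟩
  obtain ⟨q, hmax⟩ := Finite.exists_max fun q : n × n => ‖A q.1 q.2‖
  refine ⟨q, ?_⟩
  calc ‖A‖ = ‖∑ a, ∑ b, A a b • Matrix.single a b (1 : 𝕜)‖ := by
        conv_lhs => rw [Matrix.matrix_eq_sum_single A]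
        simp
    _ ≤ ∑ a, ∑ b, ‖Matrix.single a b (1 : 𝕜)‖ * ‖A q.1 q.2‖ := by
        refine norm_sum_le_of_le _ fun a _ => norm_sum_le_of_le _ fun b _ => ?_
        rw [norm_smul, mul_comm]
        gcongr
        exact hmax (a, b)
    _ = (∑ a, ∑ b, ‖Matrix.single a b (1 : 𝕜)‖) * ‖A q.1 q.2‖ := by simp only [Finset.sum_mul]

theorem exists_norm_entry_consecProd_pow_le_of_charpoly_coeff_le (n : Type*) [Fintype n]
    [DecidableEq n] :
    ∃ N, 1 ≤ N ∧ ∃ (m : ℕ) (C : ℝ), ∀ A : ℕ → Matrix n n ℂ, (∀ i, ‖A i‖ ≤ 1) → ∀ η, 0 ≤ η →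
      (∀ i l, 1 ≤ l → ∀ t < Fintype.card n, ‖(consecProd A i l).charpoly.coeff t‖ ≤ η) →
      ∀ q : n × n, ‖consecProd A 0 N q.1 q.2‖ ^ m ≤ C * η := by
  obtain ⟨N, hN, hzero⟩ := exists_forall_matrix_consecProd_eq_zero ℂ n
  let G := genericSeq n ℂ N
  let s : Set (MvPolynomial (Fin N × n × n) ℂ) :=
    {c | ∃ i l t, 1 ≤ l ∧ t < Fintype.card n ∧ c = (consecProd G i l).charpoly.coeff t}
  have hvanish (p : Fin N × n × n → ℂ) (hp : ∀ c ∈ s, aeval p c = 0) (q : n × n) :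
      aeval p (consecProd G 0 N q.1 q.2) = 0 := by
    have hprod : (aeval p).toRingHom.mapMatrix (consecProd G 0 N) = 0 := by
      rw [map_consecProd]
      refine hzero _ fun i l hl => isNilpotent_of_charpoly_coeff_eq_zero fun t ht => ?_
      rw [← map_charpoly_coeff_consecProd]
      exact hp _ ⟨i, l, t, hl, ht, rfl⟩
    exact congrFun₂ hprod q.1 q.2
  obtain ⟨m, C, hC⟩ := exists_norm_aeval_pow_le_of_forall_zeroLocus
    (isCompact_closedBall (0 : Fin N × n × n → ℂ) 1) hvanish
  refine ⟨N, hN, m, C, fun A hA η hη hcoeff q => ?_⟩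
  let p : Fin N × n × n → ℂ := fun q => A q.1 q.2.1 q.2.2
  have hp : p ∈ Metric.closedBall 0 1 := by
    rw [mem_closedBall_zero_iff, pi_norm_le_iff_of_nonneg zero_le_one]
    exact fun q => (norm_entry_le_l2_opNorm _ _ _).trans (hA _)
  have heval i l (hl : 1 ≤ l) : (aeval p).toRingHom.mapMatrix (consecProd G i l) =
      if i + l ≤ N then consecProd A i l else 0 := by
    simp_rw [map_consecProd, G, p, mapMatrix_aeval_genericSeq, consecProd_ite_lt A N i hl]
  have hs : ∀ c ∈ s, ‖aeval p c‖ ≤ η := by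
    rintro _ ⟨i, l, t, hl, ht, rfl⟩
    change ‖(aeval p).toRingHom ((consecProd G i l).charpoly.coeff t)‖ ≤ η
    rw [map_charpoly_coeff_consecProd, ← map_consecProd, heval i l hl]
    split_ifs
    · exact hcoeff i l hl t ht
    · simpa [Polynomial.coeff_X_pow, ht.ne] using hη
  have hentry : aeval p (consecProd G 0 N q.1 q.2) = consecProd A 0 N q.1 q.2 := by
    simpa using congrFun₂ (heval 0 N hN) q.1 q.2
  exact hentry ▸ hC p hp η hη hs q

theorem exists_norm_consecProd_pow_le (n : Type*) [Fintype n] [DecidableEq n] [Nonempty n] :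
    ∃ N, 1 ≤ N ∧ ∃ (m : ℕ) (C : ℝ), ∀ A : ℕ → Matrix n n ℂ, (∀ i, ‖A i‖ ≤ 1) →
      ∀ η, 0 ≤ η → η ≤ 1 → (∀ i l, 1 ≤ l → ∀ z ∈ spectrum ℂ (consecProd A i l), ‖z‖ ≤ η) →
      ‖consecProd A 0 N‖ ^ m ≤ C * η := by
  obtain ⟨N, hN, m, C, hC⟩ := exists_norm_entry_consecProd_pow_le_of_charpoly_coeff_le n
  obtain ⟨K, hK, hmax⟩ := exists_l2_opNorm_le_mul_norm_entry n ℂ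
  refine ⟨N, hN, m, K ^ m * (C * 2 ^ Fintype.card n), fun A hA η hη₀ hη₁ hspec => ?_⟩
  obtain ⟨q, hq⟩ := hmax (consecProd A 0 N)
  have hentry : ‖consecProd A 0 N q.1 q.2‖ ^ m ≤ C * (2 ^ Fintype.card n * η) :=
    hC A hA _ (by positivity)
      (fun i l hl t ht => norm_charpoly_coeff_le hη₀ hη₁ (hspec i l hl) ht) q
  calc ‖consecProd A 0 N‖ ^ m ≤ (K * ‖consecProd A 0 N q.1 q.2‖) ^ m := by gcongr
    _ = K ^ m * ‖consecProd A 0 N q.1 q.2‖ ^ m := mul_pow _ _ _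
    _ ≤ K ^ m * (C * (2 ^ Fintype.card n * η)) := by gcongr
    _ = K ^ m * (C * 2 ^ Fintype.card n) * η := by ring

end BochiInequality

theorem ShiftInv.comp_add_mem {I : Type*} {Λ : Set (ℕ → I)} (hΛ : ShiftInv Λ) {x : ℕ → I}
    (hx : x ∈ Λ) (s : ℕ) : (fun j => x (j + s)) ∈ Λ := by
  induction s with
  | zero => exact hx
  | succ s ih => simpa only [add_right_comm, add_assoc] using hΛ _ ih

section UniformStability

variable {R : Type*} [NormedRing R]

/-- Uniform exponential stability of a family of sequences in a normed ring: the products of the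
first `n` terms decay exponentially in `n`, with the same constants for the whole family. -/
def UniformlyExpStable (Γ : Set (ℕ → R)) : Prop :=
  ∃ C r : ℝ, 0 < r ∧ r < 1 ∧ ∀ A ∈ Γ, ∀ n, ‖consecProd A 0 n‖ ≤ C * r ^ n

theorem continuous_consecProd (i l : ℕ) : Continuous fun A : ℕ → R => consecProd A i l := by
  induction l with
  | zero => exact continuous_const
  | succ l ih => exact (continuous_apply (i + l)).mul ih

theorem norm_consecProd_le_pow [NormOneClass R] {A : ℕ → R} {M : ℝ} (hA : ∀ j, ‖A j‖ ≤ M)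
    (i l : ℕ) : ‖consecProd A i l‖ ≤ M ^ l := by
  induction l with
  | zero => simp
  | succ l ih => exact pow_succ' M l ▸ norm_mul_le_of_le (hA _) ih

variable {Γ : Set (ℕ → R)}

theorem ShiftInv.exists_forall_norm_le (hinv : ShiftInv Γ) (hΓ : IsCompact Γ) :
    ∃ M, 1 ≤ M ∧ ∀ A ∈ Γ, ∀ j, ‖A j‖ ≤ M := by
  obtain ⟨M, hM⟩ := hΓ.exists_bound_of_continuousOn (continuous_apply 0).continuousOn
  refine ⟨max M 1, le_max_right _ _, fun A hA j => le_max_of_le_left ?_⟩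
  simpa using hM _ (hinv.comp_add_mem hA j)

theorem exists_lt_one_le_pow {c : ℝ} (hc : c < 1) (N : ℕ) : ∃ r, 0 < r ∧ r < 1 ∧ c ≤ r ^ N := by
  have hpow : Tendsto (fun r : ℝ => r ^ N) (𝓝[<] 1) (𝓝 1) := by
    simpa using ((continuous_pow N).tendsto (1 : ℝ)).mono_left nhdsWithin_le_nhds
  obtain ⟨r, hcr, hr₀, hr₁⟩ :=
    ((hpow.eventually_const_le hc).and (Ioo_mem_nhdsLT zero_lt_one)).exists
  exact ⟨r, hr₀, hr₁, hcr⟩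

theorem ShiftInv.uniformlyExpStable_of_norm_le [NormOneClass R] (hinv : ShiftInv Γ) {M c : ℝ}
    {N : ℕ} (hM : 1 ≤ M) (hbound : ∀ A ∈ Γ, ∀ j, ‖A j‖ ≤ M) (hc : c < 1)
    (hcontr : ∀ A ∈ Γ, ∃ n, 1 ≤ n ∧ n ≤ N ∧ ‖consecProd A 0 n‖ ≤ c) : UniformlyExpStable Γ := by
  obtain ⟨r, hr₀, hr₁, hcr⟩ := exists_lt_one_le_pow hc N
  refine ⟨(M / r) ^ N, r, hr₀, hr₁, fun A hA m => ?_⟩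
  have hpow {n : ℕ} (hn : n ≤ N) : r ^ N ≤ r ^ n := pow_le_pow_of_le_one hr₀.le hr₁.le hn
  induction m using Nat.strong_induction_on generalizing A with
  | _ m ih =>
    rcases le_or_gt m N with hm | hm
    · calc ‖consecProd A 0 m‖ ≤ M ^ m := norm_consecProd_le_pow (hbound A hA) 0 m
        _ ≤ M ^ N := pow_le_pow_right₀ hM hm
        _ = (M / r) ^ N * r ^ N := by rw [← mul_pow, div_mul_cancel₀ M hr₀.ne']
        _ ≤ (M / r) ^ N * r ^ m := mul_le_mul_of_nonneg_left (hpow hm) (by positivity)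
    · obtain ⟨n, hn₁, hnN, hn⟩ := hcontr A hA
      obtain ⟨l, rfl⟩ := Nat.exists_eq_add_of_le (hnN.trans hm.le)
      have htail : ‖consecProd A (0 + n) l‖ ≤ (M / r) ^ N * r ^ l := by
        simpa only [consecProd_comp_add] using ih l (by lia) _ (hinv.comp_add_mem hA n)
      calc ‖consecProd A 0 (n + l)‖
          ≤ ((M / r) ^ N * r ^ l) * r ^ n := by
            rw [consecProd_add]
            exact norm_mul_le_of_le htail (hn.trans (hcr.trans (hpow hnN)))
        _ = (M / r) ^ N * r ^ (n + l) := by rw [pow_add]; ring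

theorem ShiftInv.uniformlyExpStable_of_isCompact [NormOneClass R] (hinv : ShiftInv Γ)
    (hΓ : IsCompact Γ) (hcontr : ∀ A ∈ Γ, ∃ n, 1 ≤ n ∧ ‖consecProd A 0 n‖ < 1) :
    UniformlyExpStable Γ := by
  obtain ⟨M, hM, hbound⟩ := hinv.exists_forall_norm_le hΓ
  let U (k : ℕ) : Set (ℕ → R) :=
    ⋃ n ∈ Set.Icc 1 k, {A | ‖consecProd A 0 n‖ < 1 - 1 / ((k : ℝ) + 1)}
  have hopen k : IsOpen (U k) := isOpen_biUnion fun n _ =>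
    isOpen_lt (continuous_consecProd 0 n).norm continuous_const
  have hmono : Monotone U := fun k k' hk =>
    Set.biUnion_mono (Set.Icc_subset_Icc_right hk) fun n _ A hA =>
      (show ‖consecProd A 0 n‖ < _ from hA).trans_le (sub_le_sub_left (Nat.one_div_le_one_div hk) 1)
  have hcover : Γ ⊆ ⋃ k, U k := fun A hA => by
    obtain ⟨n, hn₁, hn⟩ := hcontr A hA
    obtain ⟨k, hk⟩ := exists_nat_one_div_lt (sub_pos.2 hn)
    have := Nat.one_div_le_one_div (α := ℝ) (le_max_right n k)
    refine Set.mem_iUnion.2 ⟨max n k, Set.mem_biUnion ⟨hn₁, le_max_left n k⟩ ?_⟩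
    change ‖consecProd A 0 n‖ < _
    linarith
  obtain ⟨k, hk⟩ := hΓ.elim_directed_cover U hopen hcover hmono.directed_le
  refine hinv.uniformlyExpStable_of_norm_le hM hbound (c := 1 - 1 / ((k : ℝ) + 1)) (N := k)
    (sub_lt_self 1 Nat.one_div_pos_of_nat) fun A hA => ?_
  obtain ⟨n, ⟨hn₁, hnk⟩, hn⟩ := Set.mem_iUnion₂.1 (hk hA)
  exact ⟨n, hn₁, hnk, le_of_lt hn⟩

end UniformStability

section SupNorm

variable {R : Type*} [NormedRing R]

/-- The supremum, over a family of sequences, of the norm of the product of the first `n` terms. It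
has the junk value `0` when these norms are unbounded. -/
noncomputable def supNormProd (Γ : Set (ℕ → R)) (n : ℕ) : ℝ :=
  ⨆ A : Γ, ‖consecProd A.1 0 n‖

variable [NormOneClass R] {Γ : Set (ℕ → R)} {M : ℝ}

theorem ShiftInv.norm_consecProd_le_supNormProd (hinv : ShiftInv Γ)
    (hbound : ∀ A ∈ Γ, ∀ j, ‖A j‖ ≤ M) {A : ℕ → R} (hA : A ∈ Γ) (i n : ℕ) :
    ‖consecProd A i n‖ ≤ supNormProd Γ n := by
  have hbdd : BddAbove (Set.range fun A : Γ => ‖consecProd A.1 0 n‖) :=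
    ⟨M ^ n, Set.forall_mem_range.2 fun A => norm_consecProd_le_pow (hbound A A.2) 0 n⟩
  calc ‖consecProd A i n‖ = ‖consecProd (fun j => A (j + i)) 0 n‖ := by
        rw [consecProd_comp_add, zero_add]
    _ ≤ supNormProd Γ n := le_ciSup hbdd ⟨_, hinv.comp_add_mem hA i⟩

theorem ShiftInv.supNormProd_add_le (hinv : ShiftInv Γ) (hbound : ∀ A ∈ Γ, ∀ j, ‖A j‖ ≤ M)
    (m n : ℕ) : supNormProd Γ (m + n) ≤ supNormProd Γ m * supNormProd Γ n := by
  have hnonneg n : 0 ≤ supNormProd Γ n := Real.iSup_nonneg fun _ => norm_nonneg _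
  refine Real.iSup_le (fun A => ?_) (mul_nonneg (hnonneg m) (hnonneg n))
  rw [consecProd_add, mul_comm (supNormProd Γ m)]
  exact norm_mul_le_of_le (hinv.norm_consecProd_le_supNormProd hbound A.2 _ _)
    (hinv.norm_consecProd_le_supNormProd hbound A.2 _ _)

end SupNorm

section Fekete

theorem one_le_of_submultiplicative_of_pow_le {a : ℕ → ℝ} {r C : ℝ} {N m : ℕ} (hN : 1 ≤ N)
    (hr : 0 < r) (ha : ∀ n, 1 ≤ a n) (hmul : ∀ k l, a (k + l) ≤ a k * a l)
    (hpow : ∀ᶠ n in atTop, a (N * n) ^ m ≤ C * r ^ n * a n ^ (N * m)) : 1 ≤ r := by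
  have ha₀ n : 0 < a n := zero_lt_one.trans_le (ha n)
  have hsub : Subadditive fun n => Real.log (a n) := fun k l => by
    rw [← Real.log_mul (ha₀ k).ne' (ha₀ l).ne']
    exact Real.log_le_log (ha₀ _) (hmul k l)
  have hlim : Tendsto (fun n => Real.log (a n) / n) atTop (𝓝 hsub.lim) :=
    hsub.tendsto_lim ⟨0, Set.forall_mem_range.2 fun n =>
      div_nonneg (Real.log_nonneg (ha n)) n.cast_nonneg⟩
  have hlimN : Tendsto (fun n => Real.log (a (N * n)) / (N * n : ℕ)) atTop (𝓝 hsub.lim) :=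
    hlim.comp (tendsto_id.const_mul_atTop' hN)
  have hlog : ∀ᶠ n : ℕ in atTop, (N * m) * (Real.log (a (N * n)) / (N * n : ℕ)) ≤
      Real.log C / n + Real.log r + (N * m) * (Real.log (a n) / n) := by
    filter_upwards [hpow, eventually_ge_atTop 1] with n hn hn₁
    have hC : 0 < C := by
      by_contra! hC
      have := (one_le_pow₀ (n := m) (ha (N * n))).trans hn
      have := mul_nonpos_of_nonpos_of_nonneg hC
        (mul_nonneg (pow_nonneg hr.le n) (pow_nonneg (ha₀ n).le (N * m)))
      linarith
    have hlog := Real.log_le_log (pow_pos (ha₀ _) m) hn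
    rw [Real.log_pow, Real.log_mul (by positivity) (pow_pos (ha₀ n) _).ne',
      Real.log_mul hC.ne' (by positivity), Real.log_pow, Real.log_pow] at hlog
    have : (0 : ℝ) < N := by exact_mod_cast hN
    have : (0 : ℝ) < n := by exact_mod_cast hn₁
    push_cast at hlog ⊢
    field_simp
    linarith
  have hle := le_of_tendsto_of_tendsto (hlimN.const_mul _)
    (((tendsto_const_div_atTop_nhds_zero_nat _).add_const _).add (hlim.const_mul _)) hlog
  exact (Real.log_nonneg_iff hr).1 (by linarith)

end Fekete

section BergerWang

open scoped Matrix.Norms.L2Operator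

theorem consecProd_smul {G M : Type*} [CommMonoid G] [Monoid M] [MulAction G M]
    [IsScalarTower G M M] [SMulCommClass G M M] (c : G) (A : ℕ → M) (i l : ℕ) :
    consecProd (fun j => c • A j) i l = c ^ l • consecProd A i l := by
  induction l with
  | zero => simp
  | succ l ih => rw [consecProd_succ, ih, smul_mul_smul_comm, ← pow_succ', consecProd_succ]

theorem norm_le_of_mem_spectrum_inv_smul {𝕜 R : Type*} [NormedField 𝕜] [Ring R] [Algebra 𝕜 R]
    {P : R} {c : 𝕜} {b : ℝ} (hc : 1 ≤ ‖c‖) (hP : ∀ z ∈ spectrum 𝕜 P, ‖z‖ ≤ b) :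
    ∀ z ∈ spectrum 𝕜 (c⁻¹ • P), ‖z‖ ≤ b := by
  have hc₀ : c⁻¹ ≠ 0 := inv_ne_zero (norm_pos_iff.1 (zero_lt_one.trans_le hc))
  intro z hz
  rw [← Units.val_mk0 hc₀, ← Units.smul_def, spectrum.unit_smul_eq_smul] at hz
  obtain ⟨w, hw, rfl⟩ := hz
  calc ‖c⁻¹ * w‖ = ‖c‖⁻¹ * ‖w‖ := by rw [norm_mul, norm_inv]
    _ ≤ ‖w‖ := mul_le_of_le_one_left (norm_nonneg w) (inv_le_one_of_one_le₀ hc)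
    _ ≤ b := hP w hw

theorem exists_norm_consecProd_mul_pow_le (n : Type*) [Fintype n] [DecidableEq n] [Nonempty n] :
    ∃ N, 1 ≤ N ∧ ∃ (m : ℕ) (C : ℝ), ∀ (A : ℕ → Matrix n n ℂ) (k : ℕ) (c η : ℝ), 1 ≤ c → 0 ≤ η →
      η ≤ 1 → (∀ i, ‖consecProd A i k‖ ≤ c) →
      (∀ i l, k ≤ l → ∀ z ∈ spectrum ℂ (consecProd A i l), ‖z‖ ≤ η) →
      ‖consecProd A 0 (N * k)‖ ^ m ≤ C * η * c ^ (N * m) := by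
  obtain ⟨N, hN, m, C, hC⟩ := exists_norm_consecProd_pow_le n
  refine ⟨N, hN, m, C, fun A k c η hc hη₀ hη₁ hnorm hspec => ?_⟩
  have hc₀ : 0 < c := zero_lt_one.trans_le hc
  let B (j : ℕ) : Matrix n n ℂ := (c : ℂ)⁻¹ • consecProd A (j * k) k
  have hB i l : consecProd B i l = ((c : ℂ) ^ l)⁻¹ • consecProd A (i * k) (l * k) := by
    rw [consecProd_smul, consecProd_consecProd, inv_pow]
  have hBnorm i : ‖B i‖ ≤ 1 := by
    rw [norm_smul, norm_inv, Complex.norm_of_nonneg hc₀.le, inv_mul_le_one₀ hc₀]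
    exact hnorm _
  have hBspec i l (hl : 1 ≤ l) : ∀ z ∈ spectrum ℂ (consecProd B i l), ‖z‖ ≤ η := by
    rw [hB]
    refine norm_le_of_mem_spectrum_inv_smul ?_ (hspec _ _ (Nat.le_mul_of_pos_left k hl))
    rw [norm_pow, Complex.norm_of_nonneg hc₀.le]
    exact one_le_pow₀ hc
  have hprod := hC B hBnorm η hη₀ hη₁ hBspec
  rwa [hB, zero_mul, norm_smul, norm_inv, norm_pow, Complex.norm_of_nonneg hc₀.le, mul_pow, inv_pow,
    ← pow_mul, inv_mul_le_iff₀ (by positivity), mul_comm (c ^ _)] at hprod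

variable {n : Type*} [Fintype n] [DecidableEq n] [Nonempty n]

theorem ShiftInv.uniformlyExpStable_of_spectrum_le {Γ : Set (ℕ → Matrix n n ℂ)}
    (hinv : ShiftInv Γ) (hne : Γ.Nonempty) {M r : ℝ} (hM : 1 ≤ M)
    (hbound : ∀ A ∈ Γ, ∀ j, ‖A j‖ ≤ M) (hr₀ : 0 < r) (hr₁ : r < 1)
    (hspec : ∀ᶠ k in atTop, ∀ A ∈ Γ, ∀ z ∈ spectrum ℂ (consecProd A 0 k), ‖z‖ ≤ r ^ k) :
    UniformlyExpStable Γ := by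
  have : Nonempty Γ := hne.to_subtype
  by_cases! hlt : ∃ k, 1 ≤ k ∧ supNormProd Γ k < 1
  · obtain ⟨k, hk, hlt⟩ := hlt
    exact hinv.uniformlyExpStable_of_norm_le hM hbound hlt fun A hA =>
      ⟨k, hk, le_rfl, hinv.norm_consecProd_le_supNormProd hbound hA 0 k⟩
  · have hone k : 1 ≤ supNormProd Γ k := by
      rcases Nat.eq_zero_or_pos k with rfl | hk
      · simp [supNormProd]
      · exact hlt k hk
    obtain ⟨N, hN, m, C, hC⟩ := exists_norm_consecProd_mul_pow_le n
    refine absurd (one_le_of_submultiplicative_of_pow_le (m := m) (C := C) hN hr₀ hone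
      (hinv.supNormProd_add_le hbound) ?_) hr₁.not_ge
    obtain ⟨k₀, hk₀⟩ := eventually_atTop.1 hspec
    filter_upwards [eventually_ge_atTop k₀] with k hk
    rw [supNormProd, Real.iSup_pow fun _ => norm_nonneg _]
    refine ciSup_le fun A => hC A k _ _ (hone k) (pow_nonneg hr₀.le k)
      (pow_le_one₀ hr₀.le hr₁.le) (fun i => hinv.norm_consecProd_le_supNormProd hbound A.2 i k)
      fun i l hl z hz => ?_
    have hz' : z ∈ spectrum ℂ (consecProd (fun j => A.1 (j + i)) 0 l) := by
      rwa [consecProd_comp_add, zero_add]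
    exact (hk₀ l (hk.trans hl) _ (hinv.comp_add_mem A.2 i) z hz').trans
      (pow_le_pow_of_le_one hr₀.le hr₁.le hl)

end BergerWang

section RootLimsup

theorem eventually_mul_pow_le_pow (C : ℝ) {r r' : ℝ} (hr : 0 ≤ r) (hrr' : r < r') :
    ∀ᶠ n : ℕ in atTop, C * r ^ n ≤ r' ^ n := by
  filter_upwards [((isLittleO_pow_pow_of_lt_left hr hrr').const_mul_left C).bound one_pos] with n hn
  rw [one_mul, Real.norm_of_nonneg (pow_nonneg (hr.trans hrr'.le) n)] at hn
  exact (Real.le_norm_self _).trans hn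

theorem limsup_iSup_rpow_one_div_lt_one_iff {ι : Type*} {f : ι → ℕ → ℝ} (hf : ∀ i n, 0 ≤ f i n)
    {K M : ℝ} (hM : 0 ≤ M) (hbound : ∀ i n, f i n ≤ K * M ^ n) :
    limsup (fun n : ℕ => ⨆ i, f i n ^ (1 / (n : ℝ))) atTop < 1 ↔
      ∃ r, 0 < r ∧ r < 1 ∧ ∀ᶠ n in atTop, ∀ i, f i n ≤ r ^ n := by
  have hroot {n : ℕ} (hn : 1 ≤ n) {c : ℝ} (hc : 0 ≤ c) (i : ι) :
      f i n ^ (1 / (n : ℝ)) ≤ c ↔ f i n ≤ c ^ n := by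
    rw [one_div, Real.rpow_inv_le_iff_of_pos (hf i n) hc (by positivity), Real.rpow_natCast]
  have hbdd : ∀ᶠ n : ℕ in atTop, ∀ i, f i n ^ (1 / (n : ℝ)) ≤ M + 1 := by
    filter_upwards [eventually_mul_pow_le_pow K hM (lt_add_one M), eventually_ge_atTop 1]
      with n hn hn₁ i
    exact (hroot hn₁ (by positivity) i).2 ((hbound i n).trans hn)
  constructor
  · intro hlt
    obtain ⟨c, hc, hc₁⟩ := exists_between hlt
    have hbdd' : IsBoundedUnder (· ≤ ·) atTop fun n : ℕ => ⨆ i, f i n ^ (1 / (n : ℝ)) :=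
      isBoundedUnder_of_eventually_le
        (hbdd.mono fun n hn => Real.iSup_le hn (by positivity : 0 ≤ M + 1))
    refine ⟨max c (1 / 2), by positivity, max_lt hc₁ one_half_lt_one, ?_⟩
    filter_upwards [eventually_lt_of_limsup_lt hc hbdd', hbdd, eventually_ge_atTop 1]
      with n hn hn' hn₁ i
    refine (hroot hn₁ (by positivity) i).1 (le_max_of_le_left ?_)
    exact (le_ciSup ⟨M + 1, Set.forall_mem_range.2 hn'⟩ i).trans hn.le
  · rintro ⟨r, hr₀, hr₁, hr⟩
    have hcobdd : IsCoboundedUnder (· ≤ ·) atTop fun n : ℕ => ⨆ i, f i n ^ (1 / (n : ℝ)) :=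
      (isBoundedUnder_of ⟨0, fun n => Real.iSup_nonneg fun i => Real.rpow_nonneg (hf i n) _⟩ :
        IsBoundedUnder (· ≥ ·) atTop _).isCoboundedUnder_le
    refine (limsup_le_of_le hcobdd ?_).trans_lt hr₁
    filter_upwards [hr, eventually_ge_atTop 1] with n hn hn₁
    exact Real.iSup_le (fun i => (hroot hn₁ hr₀.le i).2 (hn i)) hr₀.le

theorem limsup_rpow_one_div_lt_one_iff {f : ℕ → ℝ} (hf : ∀ n, 0 ≤ f n) {K M : ℝ} (hM : 0 ≤ M)
    (hbound : ∀ n, f n ≤ K * M ^ n) :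
    limsup (fun n : ℕ => f n ^ (1 / (n : ℝ))) atTop < 1 ↔
      ∃ r, 0 < r ∧ r < 1 ∧ ∀ᶠ n in atTop, f n ≤ r ^ n := by
  simpa using limsup_iSup_rpow_one_div_lt_one_iff (ι := Unit) (fun _ => hf) hM fun _ => hbound

end RootLimsup

theorem UniformlyExpStable.exists_eventually_norm_le_pow {R : Type*} [NormedRing R]
    {Γ : Set (ℕ → R)} (hΓ : UniformlyExpStable Γ) :
    ∃ r, 0 < r ∧ r < 1 ∧ ∀ᶠ n in atTop, ∀ A ∈ Γ, ‖consecProd A 0 n‖ ≤ r ^ n := by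
  obtain ⟨C, r, hr₀, hr₁, hC⟩ := hΓ
  obtain ⟨r', hrr', hr'₁⟩ := exists_between hr₁
  refine ⟨r', hr₀.trans hrr', hr'₁, ?_⟩
  filter_upwards [eventually_mul_pow_le_pow C hr₀.le hrr'] with n hn A hA
  exact (hC A hA n).trans hn

section SwitchedSystems

open scoped Matrix.Norms.L2Operator

theorem tendsto_zero_of_tendsto_toEuclideanCLM_single {𝕜 n ι : Type*} [RCLike 𝕜] [Fintype n]
    [DecidableEq n] {l : Filter ι} {P : ι → Matrix n n 𝕜}
    (hP : ∀ b, Tendsto (fun k => Matrix.toEuclideanCLM (𝕜 := 𝕜) (P k) (EuclideanSpace.single b 1))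
      l (𝓝 0)) :
    Tendsto P l (𝓝 0) := by
  refine tendsto_pi_nhds.2 fun a => tendsto_pi_nhds.2 fun b => ?_
  simpa [Function.comp_def] using
    ((EuclideanSpace.proj (𝕜 := 𝕜) a).continuous.tendsto 0).comp (hP b)

variable {d : ℕ} {I : Type*} {S : I → Matrix (Fin d) (Fin d) ℂ} {Λ : Set (ℕ → I)}

/-- The matrix sequences `(S_{i_{j+1}})_{j ≥ 0}` read along the switching signals in `Λ`. -/
def matrixSeqs (S : I → Matrix (Fin d) (Fin d) ℂ) (Λ : Set (ℕ → I)) :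
    Set (ℕ → Matrix (Fin d) (Fin d) ℂ) :=
  (fun x j => S (x j)) '' Λ

theorem shiftInv_matrixSeqs (hinv : ShiftInv Λ) : ShiftInv (matrixSeqs S Λ) := by
  rintro _ ⟨x, hx, rfl⟩
  exact ⟨_, hinv x hx, rfl⟩

theorem isCompact_matrixSeqs [TopologicalSpace I] (hS : Continuous S) (hΛ : IsCompact Λ) :
    IsCompact (matrixSeqs S Λ) :=
  hΛ.image (by fun_prop)

theorem prodS_eq_consecProd (S : I → Matrix (Fin d) (Fin d) ℂ) (x : ℕ → I) (n : ℕ) :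
    prodS S x n = consecProd (fun j => S (x j)) 0 n := by
  induction n with
  | zero => rfl
  | succ n ih => rw [prodS, ih, consecProd_succ, zero_add]

theorem UniformlyExpStable.exists_eventually_opNorm_prodS_le_pow
    (hstab : UniformlyExpStable (matrixSeqs S Λ)) :
    ∃ r, 0 < r ∧ r < 1 ∧ ∀ᶠ n in atTop, ∀ x ∈ Λ, opNorm (prodS S x n) ≤ r ^ n := by
  obtain ⟨r, hr₀, hr₁, hr⟩ := hstab.exists_eventually_norm_le_pow
  refine ⟨r, hr₀, hr₁, hr.mono fun n hn x hx => ?_⟩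
  rw [prodS_eq_consecProd]
  exact hn _ ⟨x, hx, rfl⟩

section Nonempty

variable [Nonempty (Fin d)]

theorem specRad_le_opNorm (A : Matrix (Fin d) (Fin d) ℂ) : specRad A ≤ opNorm A :=
  ENNReal.toReal_mono ENNReal.coe_ne_top (spectrum.spectralRadius_le_nnnorm A)

theorem norm_le_specRad {A : Matrix (Fin d) (Fin d) ℂ} {z : ℂ} (hz : z ∈ spectrum ℂ A) :
    ‖z‖ ≤ specRad A :=
  ENNReal.toReal_mono (ne_top_of_le_ne_top ENNReal.coe_ne_top (spectrum.spectralRadius_le_nnnorm A))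
    (le_iSup₂ (f := fun z (_ : z ∈ spectrum ℂ A) => (‖z‖₊ : ENNReal)) z hz)

variable [TopologicalSpace I]

theorem exists_forall_opNorm_prodS_le_pow (hS : Continuous S) (hΛ : IsCompact Λ)
    (hinv : ShiftInv Λ) : ∃ M, 1 ≤ M ∧ ∀ x ∈ Λ, ∀ n, opNorm (prodS S x n) ≤ M ^ n := by
  obtain ⟨M, hM, hbound⟩ :=
    (shiftInv_matrixSeqs hinv).exists_forall_norm_le (isCompact_matrixSeqs hS hΛ)
  refine ⟨M, hM, fun x hx n => ?_⟩
  rw [prodS_eq_consecProd]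
  exact norm_consecProd_le_pow (hbound _ ⟨x, hx, rfl⟩) 0 n

theorem gsr_lt_one_iff_uniformlyExpStable (hS : Continuous S) (hΛ : IsCompact Λ)
    (hinv : ShiftInv Λ) (hne : Λ.Nonempty) : gsr S Λ < 1 ↔ UniformlyExpStable (matrixSeqs S Λ) := by
  obtain ⟨M, hM, hbound⟩ := exists_forall_opNorm_prodS_le_pow hS hΛ hinv
  rw [gsr, limsup_iSup_rpow_one_div_lt_one_iff (f := fun (x : Λ) n => specRad (prodS S x n))
    (K := 1) (M := M) (fun _ _ => ENNReal.toReal_nonneg) (by positivity)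
    fun x n => (one_mul (M ^ n)).symm ▸ (specRad_le_opNorm _).trans (hbound x x.2 n)]
  constructor
  · rintro ⟨r, hr₀, hr₁, hr⟩
    obtain ⟨M', hM', hbound'⟩ :=
      (shiftInv_matrixSeqs hinv).exists_forall_norm_le (isCompact_matrixSeqs hS hΛ)
    refine (shiftInv_matrixSeqs hinv).uniformlyExpStable_of_spectrum_le (hne.image _) hM' hbound'
      hr₀ hr₁ (hr.mono ?_)
    rintro n hn _ ⟨x, hx, rfl⟩ z hz
    rw [← prodS_eq_consecProd] at hz
    exact (norm_le_specRad hz).trans (hn ⟨x, hx⟩)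
  · intro hstab
    obtain ⟨r, hr₀, hr₁, hr⟩ := hstab.exists_eventually_opNorm_prodS_le_pow
    exact ⟨r, hr₀, hr₁, hr.mono fun n hn x => (specRad_le_opNorm _).trans (hn x x.2)⟩

theorem uniformlyExpStable_of_tendsto_prodS (hS : Continuous S) (hΛ : IsCompact Λ)
    (hinv : ShiftInv Λ) (htendsto : ∀ x ∈ Λ, Tendsto (prodS S x) atTop (𝓝 0)) :
    UniformlyExpStable (matrixSeqs S Λ) := by
  refine (shiftInv_matrixSeqs hinv).uniformlyExpStable_of_isCompact (isCompact_matrixSeqs hS hΛ) ?_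
  rintro _ ⟨x, hx, rfl⟩
  have hlt : ∀ᶠ n in atTop, ‖prodS S x n‖ < 1 :=
    (htendsto x hx).norm.eventually_lt_const (by simp)
  obtain ⟨n, hn, hn₁⟩ := (hlt.and (eventually_ge_atTop 1)).exists
  exact ⟨n, hn₁, prodS_eq_consecProd S x n ▸ hn⟩

theorem forall_limsup_opNorm_lt_one_iff_uniformlyExpStable (hS : Continuous S) (hΛ : IsCompact Λ)
    (hinv : ShiftInv Λ) :
    (∀ x ∈ Λ, limsup (fun n : ℕ => opNorm (prodS S x n) ^ (1 / (n : ℝ))) atTop < 1) ↔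
      UniformlyExpStable (matrixSeqs S Λ) := by
  obtain ⟨M, hM, hbound⟩ := exists_forall_opNorm_prodS_le_pow hS hΛ hinv
  have hiff x (hx : x ∈ Λ) := limsup_rpow_one_div_lt_one_iff (f := fun n => opNorm (prodS S x n))
    (K := 1) (M := M) (fun n => norm_nonneg _) (by positivity) (by simpa using hbound x hx)
  constructor
  · intro hlt
    refine uniformlyExpStable_of_tendsto_prodS hS hΛ hinv fun x hx => ?_
    obtain ⟨r, hr₀, hr₁, hr⟩ := (hiff x hx).1 (hlt x hx)
    exact squeeze_zero_norm' hr (tendsto_pow_atTop_nhds_zero_of_lt_one hr₀.le hr₁)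
  · intro hstab x hx
    obtain ⟨r, hr₀, hr₁, hr⟩ := hstab.exists_eventually_opNorm_prodS_le_pow
    exact (hiff x hx).2 ⟨r, hr₀, hr₁, hr.mono fun n hn => hn x hx⟩

theorem forall_limsup_norm_apply_lt_one_iff_uniformlyExpStable (hS : Continuous S)
    (hΛ : IsCompact Λ) (hinv : ShiftInv Λ) :
    (∀ x ∈ Λ, ∀ x₀ : EuclideanSpace ℂ (Fin d), x₀ ≠ 0 →
        limsup (fun n : ℕ =>
          ‖Matrix.toEuclideanCLM (𝕜 := ℂ) (prodS S x n) x₀‖ ^ (1 / (n : ℝ))) atTop < 1) ↔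
      UniformlyExpStable (matrixSeqs S Λ) := by
  obtain ⟨M, hM, hbound⟩ := exists_forall_opNorm_prodS_le_pow hS hΛ hinv
  have happly x n (x₀ : EuclideanSpace ℂ (Fin d)) {b : ℝ} (hb : opNorm (prodS S x n) ≤ b) :
      ‖Matrix.toEuclideanCLM (𝕜 := ℂ) (prodS S x n) x₀‖ ≤ ‖x₀‖ * b :=
    mul_comm b _ ▸ ContinuousLinearMap.le_of_opNorm_le _ hb x₀
  have hiff x (hx : x ∈ Λ) x₀ := limsup_rpow_one_div_lt_one_iff
    (f := fun n => ‖Matrix.toEuclideanCLM (𝕜 := ℂ) (prodS S x n) x₀‖) (K := ‖x₀‖) (M := M)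
    (fun n => norm_nonneg _) (by positivity) fun n => happly x n x₀ (hbound x hx n)
  constructor
  · intro hlt
    refine uniformlyExpStable_of_tendsto_prodS hS hΛ hinv fun x hx =>
      tendsto_zero_of_tendsto_toEuclideanCLM_single fun b => ?_
    obtain ⟨r, hr₀, hr₁, hr⟩ := (hiff x hx _).1 (hlt x hx (EuclideanSpace.single b 1) (by simp))
    exact squeeze_zero_norm' hr (tendsto_pow_atTop_nhds_zero_of_lt_one hr₀.le hr₁)
  · intro hstab x hx x₀ _
    obtain ⟨r, hr₀, hr₁, hr⟩ := hstab.exists_eventually_opNorm_prodS_le_pow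
    obtain ⟨r', hrr', hr'₁⟩ := exists_between hr₁
    refine (hiff x hx x₀).2 ⟨r', hr₀.trans hrr', hr'₁, ?_⟩
    filter_upwards [hr, eventually_mul_pow_le_pow ‖x₀‖ hr₀.le hrr'] with n hn hn'
    exact (happly x n x₀ (hn x hx)).trans hn'

end Nonempty

end SwitchedSystems

theorem gsr_lt_one_iff_exp_stable_general {d : ℕ} (hd : 1 ≤ d) {I : Type*} [TopologicalSpace I]
    (S : I → Matrix (Fin d) (Fin d) ℂ) (hS : Continuous S)
    (Λ : Set (ℕ → I)) (hne : Λ.Nonempty) (hcomp : IsCompact Λ) (hinv : ShiftInv Λ) :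
    (gsr S Λ < 1 ↔
        ∀ x ∈ Λ, limsup (fun n : ℕ => opNorm (prodS S x n) ^ (1 / (n : ℝ))) atTop < 1) ∧
      ((∀ x ∈ Λ, limsup (fun n : ℕ => opNorm (prodS S x n) ^ (1 / (n : ℝ))) atTop < 1) ↔
        ∀ x ∈ Λ, ∀ x₀ : EuclideanSpace ℂ (Fin d), x₀ ≠ 0 →
          limsup (fun n : ℕ =>
            ‖Matrix.toEuclideanCLM (𝕜 := ℂ) (prodS S x n) x₀‖ ^ (1 / (n : ℝ))) atTop < 1) := by
  have : Nonempty (Fin d) := Fin.pos_iff_nonempty.1 hd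
  have hgsr := gsr_lt_one_iff_uniformlyExpStable hS hcomp hinv hne
  have hnorm := forall_limsup_opNorm_lt_one_iff_uniformlyExpStable hS hcomp hinv
  have happly := forall_limsup_norm_apply_lt_one_iff_uniformlyExpStable hS hcomp hinv
  exact ⟨hgsr.trans hnorm.symm, hnorm.trans happly.symm⟩

/-- **Corollary 2.8.** `ρ(S|Λ) < 1`, `Λ`-absolute exponential stability, and `Λ`-pointwise
exponential stability are mutually equivalent. -/
theorem gsr_lt_one_iff_exp_stable {d : ℕ} (hd : 1 ≤ d) {I : Type*} [MetricSpace I]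
    (S : I → Matrix (Fin d) (Fin d) ℂ) (hS : Continuous S)
    (Λ : Set (ℕ → I)) (hne : Λ.Nonempty) (hcomp : IsCompact Λ) (hinv : ShiftInv Λ) :
    (gsr S Λ < 1 ↔
        ∀ x ∈ Λ,
          Filter.limsup (fun n : ℕ => opNorm (prodS S x n) ^ (1 / (n : ℝ))) Filter.atTop
            < 1) ∧
      ((∀ x ∈ Λ,
          Filter.limsup (fun n : ℕ => opNorm (prodS S x n) ^ (1 / (n : ℝ))) Filter.atTop
            < 1) ↔
        ∀ x ∈ Λ, ∀ x₀ : EuclideanSpace ℂ (Fin d), x₀ ≠ 0 →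
          Filter.limsup
            (fun n : ℕ => ‖(Matrix.toEuclideanCLM (𝕜 := ℂ) (prodS S x n)) x₀‖ ^ (1 / (n : ℝ)))
            Filter.atTop < 1) :=
  gsr_lt_one_iff_exp_stable_general hd S hS Λ hne hcomp hinv
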